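/- For every real u with 1 < u ≤ 4: the denominators 2+ξ−1/u and 2+ξ−1/F(u) are positive, (1+ξ)/(2+ξ) < F(u) < 1, F(F(u)) > 1, and the exact identity F(F(u)) − 1 = (u − 1) / (ξ·(2+ξ)·u + 1) holds; consequently F(F(u)) − 1 ≤ (u − 1) / (ξ·(2+ξ) + 1). -/

import Mathlib

/-- The map `F(b) = (1+ξ)/(2+ξ−1/b)`. -/
noncomputable def F (ξ b : ℝ) : ℝ := (1 + ξ) / (2 + ξ - 1 / b)

/-- For `1 < u ≤ 4`: the denominators occurring in `F u` and `F (F u)` are positive,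
`(1+ξ)/(2+ξ) < F u < 1`, `F (F u) > 1`, the exact identity
`F(F(u)) − 1 = (u − 1)/(ξ·(2+ξ)·u + 1)` holds, and consequently
`F(F(u)) − 1 ≤ (u − 1)/(ξ·(2+ξ) + 1)`. -/
theorem F_iterate_upper (ξ : ℝ) (hξ : 0 < ξ) (u : ℝ) (hu1 : 1 < u) (hu2 : u ≤ 4) :
    0 < 2 + ξ - 1 / u ∧
    0 < 2 + ξ - 1 / F ξ u ∧
    (1 + ξ) / (2 + ξ) < F ξ u ∧
    F ξ u < 1 ∧
    1 < F ξ (F ξ u) ∧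
    F ξ (F ξ u) - 1 = (u - 1) / (ξ * (2 + ξ) * u + 1) ∧
    F ξ (F ξ u) - 1 ≤ (u - 1) / (ξ * (2 + ξ) + 1) := by
  have hu0 : 0 < u := by linarith
  have hD : 0 < (2 + ξ) * u - 1 := by nlinarith
  have hE : 0 < ξ * (2 + ξ) * u + 1 := by positivity
  have h1 : 2 + ξ - 1 / u = ((2 + ξ) * u - 1) / u := by field_simp
  have hF : F ξ u = (1 + ξ) * u / ((2 + ξ) * u - 1) := by
    unfold F
    rw [h1, div_div_eq_mul_div]
  have h2 : 2 + ξ - 1 / F ξ u = (ξ * (2 + ξ) * u + 1) / ((1 + ξ) * u) := by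
    rw [hF, one_div_div]
    field_simp
    ring
  have hFF : F ξ (F ξ u) = (1 + ξ) * ((1 + ξ) * u) / (ξ * (2 + ξ) * u + 1) := by
    rw [show F ξ (F ξ u) = (1 + ξ) / (2 + ξ - 1 / F ξ u) from rfl, h2, div_div_eq_mul_div]
  have hid : F ξ (F ξ u) - 1 = (u - 1) / (ξ * (2 + ξ) * u + 1) := by
    rw [hFF, div_sub_one hE.ne']
    congr 1
    ring
  have hpos : 0 < (u - 1) / (ξ * (2 + ξ) * u + 1) := div_pos (by linarith) hE
  refine ⟨?_, ?_, ?_, ?_, ?_, hid, ?_⟩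
  · rw [h1]; positivity
  · rw [h2]; positivity
  · rw [hF, div_lt_div_iff₀ (by positivity) hD]
    nlinarith
  · rw [hF, div_lt_one hD]
    nlinarith
  · linarith
  · rw [hid]
    have hx : 0 < ξ * (2 + ξ) := by positivity
    apply div_le_div_of_nonneg_left (by linarith) (by positivity)
    nlinarith
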